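/- Let h : R^n → [0,1] be a monotone measurable function. Then every coordinate of the vector ∫ x h(x) dγ(x) ∈ R^n is nonnegative; more generally, for every z ∈ R^n and t ≥ 0, every coordinate of ∫ x h(e^{−t/2} x + z) dγ(x) is nonnegative. -/

import Mathlib

/-! The standard Gaussian measure is invariant under the reflection `R` negating the `i`-th
coordinate. Averaging `∫ xᵢ h(x) dγ` with its image under `R` gives
`2 ∫ xᵢ h(x) dγ = ∫ xᵢ (h(x) - h(R x)) dγ`, and the right-hand integrand is pointwise nonnegative
because `h` is nondecreasing in the `i`-th coordinate. The general claim is the first one applied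
to `x ↦ h(e^{-t/2} x + z)`, which is again monotone because the scaling factor is positive. -/

open MeasureTheory ProbabilityTheory

noncomputable section

/-- The standard Gaussian measure on `ℝⁿ`. -/
def stdGaussian (n : ℕ) : Measure (Fin n → ℝ) := Measure.pi fun _ => gaussianReal 0 1

/-- `h` is monotone: nondecreasing in each coordinate when the other coordinates are
kept fixed. -/
def CoordMonotone (n : ℕ) (h : (Fin n → ℝ) → ℝ) : Prop :=
  ∀ (x : Fin n → ℝ) (i : Fin n) (s t : ℝ), s ≤ t →
    h (Function.update x i s) ≤ h (Function.update x i t)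

/-- Reflection of the `i`-th coordinate. -/
def flipCoord {n : ℕ} (i : Fin n) (x : Fin n → ℝ) : Fin n → ℝ :=
  fun j => (if j = i then fun y : ℝ => -y else id) (x j)

lemma flipCoord_eq_update {n : ℕ} (i : Fin n) (x : Fin n → ℝ) :
    flipCoord i x = Function.update x i (-x i) := by
  funext j
  by_cases hj : j = i
  · subst hj; simp [flipCoord]
  · simp [flipCoord, hj]

lemma measurePreserving_flipCoord {n : ℕ} (i : Fin n) :
    MeasurePreserving (flipCoord i) (stdGaussian n) (stdGaussian n) := by
  refine measurePreserving_pi (fun _ => gaussianReal 0 1) (fun _ => gaussianReal 0 1)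
    (f := fun j => if j = i then fun y : ℝ => -y else id) fun j => ?_
  by_cases hj : j = i
  · simp only [hj, if_true]
    exact ⟨measurable_neg, by rw [gaussianReal_map_neg, neg_zero]⟩
  · simp only [hj, if_false]
    exact MeasurePreserving.id _

/-- The integrals in the statement converge, so that they are not junk values. -/
lemma integrable_coord_mul {n : ℕ} {h : (Fin n → ℝ) → ℝ} (hmeas : Measurable h)
    (hrange : ∀ x, h x ∈ Set.Icc (0 : ℝ) 1) (i : Fin n) :
    Integrable (fun x => x i * h x) (stdGaussian n) := by
  have hid : Integrable (fun y : ℝ => y) (gaussianReal 0 1) :=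
    (memLp_id_gaussianReal 1).integrable le_rfl
  have hi : Integrable (fun x : Fin n → ℝ => x i) (stdGaussian n) :=
    integrable_comp_eval (μ := fun _ : Fin n => gaussianReal 0 1) (i := i) hid
  refine hi.mul_bdd (c := 1) hmeas.aestronglyMeasurable (ae_of_all _ fun x => ?_)
  rw [Real.norm_eq_abs, abs_of_nonneg (hrange x).1]
  exact (hrange x).2

lemma coord_mul_sub_flip_nonneg {n : ℕ} {h : (Fin n → ℝ) → ℝ} (hmono : CoordMonotone n h)
    (i : Fin n) (x : Fin n → ℝ) : 0 ≤ x i * (h x - h (flipCoord i x)) := by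
  rw [flipCoord_eq_update]
  rcases le_total 0 (x i) with hx | hx
  · have key := hmono x i (-x i) (x i) (by linarith)
    rw [Function.update_eq_self] at key
    exact mul_nonneg hx (sub_nonneg.2 key)
  · have key := hmono x i (x i) (-x i) (by linarith)
    rw [Function.update_eq_self] at key
    exact mul_nonneg_of_nonpos_of_nonpos hx (sub_nonpos.2 key)

lemma first_moment_nonneg {n : ℕ} {h : (Fin n → ℝ) → ℝ} (hmeas : Measurable h)
    (hrange : ∀ x, h x ∈ Set.Icc (0 : ℝ) 1) (hmono : CoordMonotone n h) (i : Fin n) :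
    0 ≤ ∫ x, x i * h x ∂stdGaussian n := by
  have hR := measurePreserving_flipCoord i
  have hint := integrable_coord_mul hmeas hrange i
  have hflip : ∫ x, flipCoord i x i * h (flipCoord i x) ∂stdGaussian n
      = ∫ x, x i * h x ∂stdGaussian n := by
    have hmap := integral_map (μ := stdGaussian n) hR.measurable.aemeasurable
      (f := fun x => x i * h x) (by rw [hR.map_eq]; exact hint.aestronglyMeasurable)
    rw [hR.map_eq] at hmap
    exact hmap.symm
  have hsum := integral_add hint (hR.integrable_comp_of_integrable hint)
  have hnonneg : 0 ≤ ∫ x, (x i * h x + ((fun x => x i * h x) ∘ flipCoord i) x)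
      ∂stdGaussian n := by
    refine integral_nonneg fun x => ?_
    have key := coord_mul_sub_flip_nonneg hmono i x
    have hxi : flipCoord i x i = -x i := by simp [flipCoord]
    simp only [Function.comp_apply, Pi.zero_apply, hxi]
    linarith
  simp only [Function.comp_apply] at hsum hnonneg
  rw [hsum, hflip] at hnonneg
  linarith

lemma CoordMonotone.comp_affine {n : ℕ} {h : (Fin n → ℝ) → ℝ} (hmono : CoordMonotone n h)
    {a : ℝ} (ha : 0 ≤ a) (z : Fin n → ℝ) :
    CoordMonotone n fun x => h fun j => a * x j + z j := by
  intro x i s t hst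
  have hupd : ∀ r : ℝ, (fun j => a * Function.update x i r j + z j)
      = Function.update (fun j => a * x j + z j) i (a * r + z i) := by
    intro r
    funext j
    by_cases hj : j = i
    · subst hj; simp
    · simp [hj]
  simp only [hupd]
  exact hmono _ i _ _ (by gcongr)

/-- **Fact 2.1.** For a monotone measurable `h : ℝⁿ → [0,1]`, every coordinate of
`∫ x h(x) dγ(x)` is nonnegative; more generally, for every `z ∈ ℝⁿ` and `t ≥ 0`, every
coordinate of `∫ x h(e^{-t/2} x + z) dγ(x)` is nonnegative. -/
theorem monotone_first_moment_nonneg (n : ℕ) (h : (Fin n → ℝ) → ℝ)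
    (hmeas : Measurable h) (hrange : ∀ x, h x ∈ Set.Icc (0 : ℝ) 1)
    (hmono : CoordMonotone n h) :
    (∀ i, 0 ≤ ∫ x, x i * h x ∂stdGaussian n) ∧
    (∀ (z : Fin n → ℝ) (t : ℝ), 0 ≤ t → ∀ i,
      0 ≤ ∫ x, x i * h (fun j => Real.exp (-t / 2) * x j + z j) ∂stdGaussian n) := by
  refine ⟨first_moment_nonneg hmeas hrange hmono, fun z t _ i => ?_⟩
  exact first_moment_nonneg (hmeas.comp (by fun_prop)) (fun x => hrange _)
    (hmono.comp_affine (Real.exp_pos _).le z) i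

end
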